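/- (Comparison lemma.) For every δ_0 > 0, every t_0 ∈ (0,1) and every γ > 0 there exists κ = κ(δ_0, γ, t_0) > 0 with the following property. Let n be a positive integer, let P be a nonzero real polynomial of degree ≤ n, let δ ≥ δ_0, and let t satisfy t_0 ≤ t < 1 and 0 < γ < 1−t. If |𝔈_P(δ)| ≤ κ, then |𝔈_P(tδ)| ≥ |𝔈_P(δ)|^{t+γ}. -/

import Mathlib

open MeasureTheory Set

/-- The sup norm of a polynomial on [-1,1]. -/
noncomputable def supNorm (P : Polynomial ℝ) : ℝ :=
  sSup ((fun x => |P.eval x|) '' Set.Icc (-1:ℝ) 1)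

/-- 𝔈_P(δ) = {x ∈ [-1,1] : |P(x)| ≤ e^{-δn} ‖P‖_{[-1,1]}}. -/
def sublevelSet (P : Polynomial ℝ) (n : ℕ) (δ : ℝ) : Set ℝ :=
  {x : ℝ | x ∈ Set.Icc (-1:ℝ) 1 ∧ |P.eval x| ≤ Real.exp (-δ * n) * supNorm P}

/-!
Normalise so that `‖p‖ ≤ 1` on `[-1, 1]`, and fix `x₀` with `‖p x₀‖ ≥ exp (-t δ n)`. On a ball of
radius `h` about `x₀`, only the `k` roots of `p` within a distance `ρ ≍ h` of `x₀` can make `p` much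
smaller than at `x₀`, and Pólya's inequality for their product shows that `𝔈(δ)` fills at most
`C h exp (-(1 - t) δ n / k)` of the ball, up to `γ` in the exponent. Conversely, such a cluster of
`k` roots forces `‖p x₀‖ ≤ (C h (n / k) ^ 2) ^ k` by Bernstein–Walsh. Eliminating `n / k`, the
portion of `𝔈(δ)` in the ball has measure at most `(M h) ^ ((1 - γ / 4) / t)`.

A Vitali covering of `𝔈(δ)` by balls of size comparable to the distance to the complement of
`𝔈(t δ)` globalises this to `|𝔈(δ)| ≤ (A |𝔈(t δ)|) ^ ((1 - γ / 4) / t)`, and the smallness of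
`|𝔈(δ)|` absorbs the constant `A`.
-/

open Polynomial hiding supNorm
open Metric

section BernsteinWalsh

lemma exists_eval_eq_pow_mul_eval_joukowski {K : Type*} [Field K] {Q : K[X]} {n : ℕ}
    (hQ : Q.natDegree ≤ n) :
    ∃ G : K[X], ∀ u : K, u ≠ 0 → G.eval u = u ^ n * Q.eval ((u + u⁻¹) / 2) := by
  refine ⟨∑ j ∈ Finset.range (n + 1),
    C (Q.coeff j) * (X ^ (n - j) * (C 2⁻¹ * (X ^ 2 + 1)) ^ j), fun u hu ↦ ?_⟩
  rw [eval_eq_sum_range' (Nat.lt_succ_of_le hQ), Finset.mul_sum, eval_finsetSum]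
  refine Finset.sum_congr rfl fun j hj ↦ ?_
  have hjn : u ^ n = u ^ (n - j) * u ^ j := by
    rw [← pow_add, Nat.sub_add_cancel (Finset.mem_range_succ_iff.1 hj)]
  have hlin : 2⁻¹ * (u ^ 2 + 1) = u * ((u + u⁻¹) / 2) := by
    field_simp
  simp only [eval_mul, eval_pow, eval_add, eval_C, eval_X, eval_one, hlin, mul_pow _ (_ / _), hjn]
  ring

variable {Q : ℂ[X]} {n : ℕ} {B : ℝ}

-- Bernstein–Walsh: the maximum principle for `u ↦ u ^ n * Q ((u + u⁻¹) / 2)` on the unit disc,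
-- whose boundary the Joukowski map sends onto `[-1, 1]`.
theorem norm_eval_joukowski_le (hQ : Q.natDegree ≤ n)
    (hB : ∀ v ∈ Icc (-1 : ℝ) 1, ‖Q.eval (v : ℂ)‖ ≤ B) {w : ℂ} (hw : 1 ≤ ‖w‖) :
    ‖Q.eval ((w + w⁻¹) / 2)‖ ≤ B * ‖w‖ ^ n := by
  obtain ⟨G, hG⟩ := exists_eval_eq_pow_mul_eval_joukowski hQ
  have hcircle : ∀ z ∈ frontier (ball (0 : ℂ) 1), ‖G.eval z‖ ≤ B := by
    intro z hz
    have hz1 : ‖z‖ = 1 := by simpa [frontier_ball _ one_ne_zero] using hz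
    have hreal : (z + z⁻¹) / 2 = (z.re : ℂ) := by
      rw [Complex.inv_eq_conj hz1, Complex.add_conj]; simp
    rw [hG z (norm_ne_zero_iff.1 (by simp [hz1])), norm_mul, norm_pow, hz1, one_pow, one_mul, hreal]
    exact hB _ (abs_le.1 (hz1 ▸ Complex.abs_re_le_norm z))
  have hw0 : w ≠ 0 := norm_pos_iff.1 (by linarith)
  have hdisc : ‖G.eval w⁻¹‖ ≤ B := by
    refine Complex.norm_le_of_forall_mem_frontier_norm_le isBounded_ball
      G.differentiable.diffContOnCl hcircle ?_
    simpa [closure_ball _ one_ne_zero] using inv_le_one_of_one_le₀ hw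
  rw [hG _ (inv_ne_zero hw0), norm_mul, norm_pow, norm_inv, inv_inv, add_comm w⁻¹, inv_pow,
    inv_mul_le_iff₀ (by positivity)] at hdisc
  linarith

lemma natDegree_comp_C_add_C_mul_X_le {R : Type*} [Semiring R] {Q : R[X]} {n : ℕ}
    (hQ : Q.natDegree ≤ n) (a b : R) : (Q.comp (C a + C b * X)).natDegree ≤ n := by
  have hlin : (C a + C b * X).natDegree ≤ 1 := by compute_degree
  exact natDegree_comp_le.trans (by simpa using Nat.mul_le_mul hQ hlin)

theorem norm_eval_zero_le (hQ : Q.natDegree ≤ n) {s : ℝ} (hs0 : 0 ≤ s) (hs1 : s < 1)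
    (hB : ∀ y ∈ Icc (s ^ 2) 1, ‖Q.eval (y : ℂ)‖ ≤ B) :
    ‖Q.eval 0‖ ≤ B * ((1 + s) / (1 - s)) ^ n := by
  have h1s : 0 < 1 - s := by linarith
  have hw1 : 1 ≤ (1 + s) / (1 - s) := by rw [le_div_iff₀ h1s]; linarith
  -- The affine map `v ↦ a + b v` sends `[-1, 1]` onto `[s², 1]`, and the Joukowski image of
  -- `-(1 + s) / (1 - s)` to `0`.
  set a : ℂ := (((1 + s ^ 2) / 2 : ℝ) : ℂ) with ha
  set b : ℂ := (((1 - s ^ 2) / 2 : ℝ) : ℂ) with hb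
  set w : ℝ := -((1 + s) / (1 - s)) with hw
  have hnorm : ‖(w : ℂ)‖ = (1 + s) / (1 - s) := by
    rw [Complex.norm_real, hw, norm_neg, Real.norm_of_nonneg (by linarith)]
  have hmain := norm_eval_joukowski_le (natDegree_comp_C_add_C_mul_X_le hQ a b) (B := B)
    (fun v hv ↦ ?_) (hw1.trans hnorm.ge)
  · have hzero : a + b * (((w : ℂ) + (w : ℂ)⁻¹) / 2) = 0 := by
      have : (1 + s ^ 2) / 2 + (1 - s ^ 2) / 2 * ((w + w⁻¹) / 2) = 0 := by
        have : 1 + s ≠ 0 := by positivity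
        rw [hw]; field_simp; ring
      rw [ha, hb]; exact_mod_cast this
    rw [hnorm, eval_comp] at hmain
    simpa [hzero] using hmain
  · have hv' : (1 + s ^ 2) / 2 + (1 - s ^ 2) / 2 * v ∈ Icc (s ^ 2) 1 := by
      have hs2 : 0 ≤ 1 - s ^ 2 := by nlinarith
      constructor <;> nlinarith [mul_nonneg hs2 (neg_le_iff_add_nonneg.1 hv.1),
        mul_nonneg hs2 (sub_nonneg.2 hv.2)]
    simpa [ha, hb] using hB _ hv'

theorem norm_eval_le_of_norm_eval_le_off_ball (hQ : Q.natDegree ≤ n) {s : ℝ} (hs0 : 0 ≤ s)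
    (hs1 : s < 1) {x₀ : ℝ} (hx₀ : x₀ ∈ Icc (-1 : ℝ) 1)
    (hB : ∀ x ∈ Icc (-1 : ℝ) 1, s ^ 2 ≤ dist x x₀ → ‖Q.eval (x : ℂ)‖ ≤ B) :
    ‖Q.eval (x₀ : ℂ)‖ ≤ B * ((1 + s) / (1 - s)) ^ n := by
  obtain ⟨σ, hσ, hσx⟩ : ∃ σ : ℝ, |σ| = 1 ∧ ∀ y ∈ Icc (0 : ℝ) 1, x₀ + σ * y ∈ Icc (-1 : ℝ) 1 := by
    rcases le_total x₀ 0 with h | h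
    · exact ⟨1, by simp, fun y hy ↦ ⟨by linarith [hx₀.1, hy.1], by linarith [hy.2]⟩⟩
    · exact ⟨-1, by simp, fun y hy ↦ ⟨by linarith [hy.2], by linarith [hx₀.2, hy.1]⟩⟩
  have hmain := norm_eval_zero_le (natDegree_comp_C_add_C_mul_X_le hQ (x₀ : ℂ) σ) hs0 hs1 (B := B)
    fun y hy ↦ ?_
  · simpa using hmain
  · have hy0 : 0 ≤ y := (sq_nonneg s).trans hy.1
    have hdist : dist (x₀ + σ * y) x₀ = y := by simp [hσ, abs_of_nonneg hy0]
    simpa using hB _ (hσx y ⟨hy0, hy.2⟩) (hy.1.trans hdist.ge)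

end BernsteinWalsh

section Polya

lemma lintegral_Icc_zero_sqrt_div {l r : ℝ} (hl : 0 ≤ l) (hr : 0 ≤ r) :
    ∫⁻ x in Icc 0 r, ENNReal.ofReal √(l / x) = ENNReal.ofReal (2 * √(l * r)) := by
  have hsqrt : EqOn (fun x ↦ √(l / x)) (fun x ↦ √l * x ^ (-(1 / 2) : ℝ)) (uIcc 0 r) := by
    intro x hx
    rw [uIcc_of_le hr] at hx
    simp only [Real.sqrt_div hl, Real.rpow_neg hx.1, ← Real.sqrt_eq_rpow]
    rfl
  have hint : IntervalIntegrable (fun x ↦ √(l / x)) volume 0 r :=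
    ((intervalIntegral.intervalIntegrable_rpow' (by norm_num)).const_mul √l).congr
      (hsqrt.symm.mono uIoc_subset_uIcc)
  have hval : ∫ x in (0 : ℝ)..r, √(l / x) = 2 * √(l * r) := by
    rw [intervalIntegral.integral_congr hsqrt, intervalIntegral.integral_const_mul,
      integral_rpow (Or.inl (by norm_num)), show (-(1 / 2) + 1 : ℝ) = 1 / 2 by norm_num,
      Real.zero_rpow (by norm_num), ← Real.sqrt_eq_rpow, Real.sqrt_mul hl]
    ring
  rw [Measure.restrict_congr_set Ioc_ae_eq_Icc.symm, ← hval, intervalIntegral.integral_of_le hr,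
    ofReal_integral_eq_lintegral_ofReal ((intervalIntegrable_iff_integrableOn_Ioc_of_le hr).1 hint)
      (.of_forall fun x ↦ Real.sqrt_nonneg _)]

lemma lintegral_closedBall_sqrt_div_dist_le (a : ℝ) {l r : ℝ} (hl : 0 ≤ l) (hr : 0 ≤ r) :
    ∫⁻ x in closedBall a r, ENNReal.ofReal √(l / dist x a) ≤ ENNReal.ofReal (4 * √(l * r)) := by
  have hright : ∫⁻ x in Icc a (a + r), ENNReal.ofReal √(l / dist x a) =
      ENNReal.ofReal (2 * √(l * r)) := by
    rw [← lintegral_Icc_zero_sqrt_div hl hr,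
      ← (measurePreserving_sub_right volume a).setLIntegral_comp_preimage_emb
        (measurableEmbedding_subRight a) _ (Icc 0 r), preimage_sub_const_Icc, zero_add, add_comm r]
    refine setLIntegral_congr_fun measurableSet_Icc fun x hx ↦ ?_
    simp only [Real.dist_eq, abs_of_nonneg (sub_nonneg.2 hx.1)]
  have hleft : ∫⁻ x in Icc (a - r) a, ENNReal.ofReal √(l / dist x a) =
      ENNReal.ofReal (2 * √(l * r)) := by
    rw [← lintegral_Icc_zero_sqrt_div hl hr,
      ← (Measure.measurePreserving_sub_left volume a).setLIntegral_comp_preimage_emb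
        (measurableEmbedding_subLeft a) _ (Icc 0 r), preimage_const_sub_Icc, sub_zero]
    refine setLIntegral_congr_fun measurableSet_Icc fun x hx ↦ ?_
    simp only [dist_comm x a, Real.dist_eq, abs_of_nonneg (sub_nonneg.2 hx.2)]
  calc ∫⁻ x in closedBall a r, ENNReal.ofReal √(l / dist x a)
      = ∫⁻ x in Icc (a - r) a ∪ Icc a (a + r), ENNReal.ofReal √(l / dist x a) := by
        rw [Icc_union_Icc_eq_Icc (by linarith) (by linarith), Real.closedBall_eq_Icc]
    _ ≤ _ := lintegral_union_le _ _ _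
    _ = ENNReal.ofReal (4 * √(l * r)) := by
        rw [hleft, hright, ← ENNReal.ofReal_add (by positivity) (by positivity)]
        ring_nf

lemma setLIntegral_sqrt_div_dist_le (S : Set ℝ) (a : ℝ) {l : ℝ} (hl : 0 < l) :
    ∫⁻ x in S, ENNReal.ofReal √(l / dist x a) ≤ ENNReal.ofReal (8 * l) + 2⁻¹ * volume S := by
  set f : ℝ → ENNReal := fun x ↦ ENNReal.ofReal √(l / dist x a)
  have hpt : ∀ x, f x ≤ (closedBall a (4 * l)).indicator f x + 2⁻¹ := by
    intro x
    by_cases hx : x ∈ closedBall a (4 * l)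
    · simp [indicator_of_mem hx]
    · rw [mem_closedBall, not_le] at hx
      have hhalf : √(l / dist x a) ≤ 2⁻¹ := by
        rw [Real.sqrt_le_left (by norm_num), div_le_iff₀ (by linarith)]
        linarith
      refine le_add_left ((ENNReal.ofReal_le_ofReal hhalf).trans_eq ?_)
      rw [ENNReal.ofReal_inv_of_pos two_pos, ENNReal.ofReal_ofNat]
  calc ∫⁻ x in S, f x
      ≤ ∫⁻ x in S, ((closedBall a (4 * l)).indicator f x + 2⁻¹) := lintegral_mono hpt
    _ = (∫⁻ x in S, (closedBall a (4 * l)).indicator f x) + 2⁻¹ * volume S := by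
        rw [lintegral_add_right _ measurable_const, setLIntegral_const]
    _ ≤ (∫⁻ x in closedBall a (4 * l), f x) + 2⁻¹ * volume S := by
        gcongr ?_ + _
        exact (setLIntegral_le_lintegral _ _).trans (lintegral_indicator_le _ _)
    _ ≤ ENNReal.ofReal (8 * l) + 2⁻¹ * volume S := by
        gcongr ?_ + _
        refine (lintegral_closedBall_sqrt_div_dist_le a hl.le (by positivity)).trans_eq ?_
        rw [show l * (4 * l) = (2 * l) ^ 2 by ring, Real.sqrt_sq (by positivity)]
        ring_nf

lemma card_le_sum_of_one_le_prod {ι : Type*} [Fintype ι] {f : ι → ℝ} (hf : ∀ i, 0 ≤ f i)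
    (hprod : 1 ≤ ∏ i, f i) : (Fintype.card ι : ℝ) ≤ ∑ i, f i := by
  have hpos : ∀ i, 0 < f i := fun i ↦ (hf i).lt_of_ne' fun h ↦ by
    rw [Finset.prod_eq_zero (Finset.mem_univ i) h] at hprod
    linarith
  have hlog : 0 ≤ ∑ i, Real.log (f i) := by
    rw [← Real.log_prod fun i _ ↦ (hpos i).ne']
    exact Real.log_nonneg hprod
  have hsum := Finset.sum_le_sum fun i (_ : i ∈ Finset.univ) ↦
    Real.log_le_sub_one_of_pos (hpos i)
  simp only [Finset.sum_sub_distrib, Finset.sum_const, Finset.card_univ, nsmul_eq_mul,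
    mul_one] at hsum
  linarith

lemma card_le_sum_sqrt_div_dist {X ι : Type*} [MetricSpace X] [Fintype ι] {a : ι → X} {l : ℝ}
    (hl : 0 ≤ l) {x : X} (hxa : x ∉ range a) (hx : ∏ i, dist x (a i) ≤ l ^ Fintype.card ι) :
    (Fintype.card ι : ℝ) ≤ ∑ i, √(l / dist x (a i)) := by
  have hprod : 0 < ∏ i, dist x (a i) :=
    Finset.prod_pos fun i _ ↦ dist_pos.2 fun h ↦ hxa ⟨i, h.symm⟩
  refine card_le_sum_of_one_le_prod (fun i ↦ Real.sqrt_nonneg _) ?_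
  rw [← Real.sqrt_prod _ fun i _ ↦ by positivity, Real.one_le_sqrt, Finset.prod_div_distrib,
    one_le_div hprod]
  simpa using hx

lemma setOf_prod_dist_le_pow_subset {X ι : Type*} [PseudoMetricSpace X] [Fintype ι] [Nonempty ι]
    (a : ι → X) {l : ℝ} (hl : 0 < l) :
    {x | ∏ i, dist x (a i) ≤ l ^ Fintype.card ι} ⊆ ⋃ i, closedBall (a i) l := by
  intro x hx
  by_contra hfar
  simp only [mem_iUnion, mem_closedBall, not_exists, not_le] at hfar
  have hlt := Finset.prod_lt_prod_of_nonempty (fun _ _ ↦ hl) (fun i _ ↦ hfar i)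
    (Finset.univ_nonempty (α := ι))
  rw [Finset.prod_const, Finset.card_univ] at hlt
  exact hlt.not_ge hx

-- Pólya's inequality, by Chebyshev's inequality for `∑ i, √(l / dist x (a i))`, which is at least
-- `card ι` on the sublevel set by AM-GM.
theorem volume_prod_dist_le_pow_le {ι : Type*} [Fintype ι] [Nonempty ι] (a : ι → ℝ) {l : ℝ}
    (hl : 0 < l) :
    volume {x : ℝ | ∏ i, dist x (a i) ≤ l ^ Fintype.card ι} ≤ ENNReal.ofReal (16 * l) := by
  set S := {x : ℝ | ∏ i, dist x (a i) ≤ l ^ Fintype.card ι}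
  have hSmeas : MeasurableSet S := measurableSet_le (by fun_prop) measurable_const
  have hSfin : volume S ≠ ⊤ :=
    measure_ne_top_of_subset (setOf_prod_dist_le_pow_subset a hl)
      (isCompact_iUnion fun i ↦ isCompact_closedBall (a i) l).measure_ne_top
  have hcard : ∀ᵐ x : ℝ, x ∈ S →
      (Fintype.card ι : ENNReal) ≤ ∑ i, ENNReal.ofReal √(l / dist x (a i)) := by
    filter_upwards [compl_mem_ae_iff.2 ((finite_range a).measure_zero volume)] with x hxa hx
    rw [← ENNReal.ofReal_sum_of_nonneg fun i _ ↦ Real.sqrt_nonneg _, ← ENNReal.ofReal_natCast]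
    exact ENNReal.ofReal_le_ofReal (card_le_sum_sqrt_div_dist hl.le hxa hx)
  have havg : (Fintype.card ι : ENNReal) * volume S ≤
      Fintype.card ι * (ENNReal.ofReal (8 * l) + 2⁻¹ * volume S) := by
    calc (Fintype.card ι : ENNReal) * volume S
        ≤ ∫⁻ x in S, ∑ i, ENNReal.ofReal √(l / dist x (a i)) := by
          rw [← setLIntegral_const]
          exact setLIntegral_mono_ae' hSmeas hcard
      _ = ∑ i, ∫⁻ x in S, ENNReal.ofReal √(l / dist x (a i)) :=
          lintegral_finsetSum _ fun i _ ↦ by fun_prop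
      _ ≤ ∑ _i : ι, (ENNReal.ofReal (8 * l) + 2⁻¹ * volume S) :=
          Finset.sum_le_sum fun i _ ↦ setLIntegral_sqrt_div_dist_le S (a i) hl
      _ = _ := by rw [Finset.sum_const, Finset.card_univ, nsmul_eq_mul]
  have hhalf := (ENNReal.mul_le_mul_iff_right (by simp) (by simp)).1 havg
  rw [← ENNReal.ofReal_toReal hSfin] at hhalf ⊢
  rw [show (2⁻¹ : ENNReal) = ENNReal.ofReal 2⁻¹ by simp [ENNReal.ofReal_inv_of_pos],
    ← ENNReal.ofReal_mul (by norm_num), ← ENNReal.ofReal_add (by positivity) (by positivity),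
    ENNReal.ofReal_le_ofReal_iff (by positivity)] at hhalf
  exact ENNReal.ofReal_le_ofReal (by linarith)

end Polya

section NearFar

lemma norm_eval_multiset_prod_X_sub_C {K : Type*} [NormedField K] (s : Multiset K) (x : K) :
    ‖(s.map fun z ↦ X - C z).prod.eval x‖ = (s.map (dist x)).prod := by
  induction s using Multiset.induction with
  | empty => simp
  | cons z s ih => simp [ih, dist_eq_norm]

variable {K : Type*} [NormedField K] {p : K[X]} {c x : K} {ρ h : ℝ} {n : ℕ}

open Classical in
/-- The roots of `p`, with multiplicity, at distance less than `ρ` from `c`. -/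
noncomputable def nearRoots (p : K[X]) (c : K) (ρ : ℝ) : Multiset K :=
  p.roots.filter (· ∈ ball c ρ)

open Classical in
/-- The roots of `p`, with multiplicity, at distance at least `ρ` from `c`. -/
noncomputable def farRoots (p : K[X]) (c : K) (ρ : ℝ) : Multiset K :=
  p.roots.filter (· ∉ ball c ρ)

/-- The monic factor of `p` carrying the roots near `c`. -/
noncomputable def nearFactor (p : K[X]) (c : K) (ρ : ℝ) : K[X] :=
  ((nearRoots p c ρ).map fun z ↦ X - C z).prod

/-- The factor of `p` complementary to `nearFactor`; it carries the leading coefficient. -/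
noncomputable def farFactor (p : K[X]) (c : K) (ρ : ℝ) : K[X] :=
  C p.leadingCoeff * ((farRoots p c ρ).map fun z ↦ X - C z).prod

lemma dist_lt_of_mem_nearRoots {z : K} (hz : z ∈ nearRoots p c ρ) : dist z c < ρ := by
  classical exact (Multiset.mem_filter.1 hz).2

lemma le_dist_of_mem_farRoots {z : K} (hz : z ∈ farRoots p c ρ) : ρ ≤ dist z c := by
  classical exact not_lt.1 (Multiset.mem_filter.1 hz).2

lemma card_nearRoots_le (p : K[X]) (c : K) (ρ : ℝ) : (nearRoots p c ρ).card ≤ p.natDegree := by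
  classical exact (Multiset.card_le_card (Multiset.filter_le _ _)).trans p.card_roots'

lemma card_farRoots_le (p : K[X]) (c : K) (ρ : ℝ) : (farRoots p c ρ).card ≤ p.natDegree := by
  classical exact (Multiset.card_le_card (Multiset.filter_le _ _)).trans p.card_roots'

lemma natDegree_farFactor_le (p : K[X]) (c : K) (ρ : ℝ) :
    (farFactor p c ρ).natDegree ≤ p.natDegree := by
  refine (natDegree_C_mul_le _ _).trans ?_
  rw [natDegree_multiset_prod_X_sub_C_eq_card]
  exact card_farRoots_le p c ρ

lemma nearFactor_mul_farFactor (hp : p.Splits) (c : K) (ρ : ℝ) :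
    nearFactor p c ρ * farFactor p c ρ = p := by
  classical
  conv_rhs => rw [hp.eq_prod_roots, ← Multiset.filter_add_not (· ∈ ball c ρ) p.roots,
    Multiset.map_add, Multiset.prod_add]
  rw [nearFactor, farFactor, mul_left_comm]
  rfl

lemma norm_eval_nearFactor_mul (hp : p.Splits) (c : K) (ρ : ℝ) (x : K) :
    ‖(nearFactor p c ρ).eval x‖ * ‖(farFactor p c ρ).eval x‖ = ‖p.eval x‖ := by
  rw [← norm_mul, ← eval_mul, nearFactor_mul_farFactor hp]

lemma norm_eval_nearFactor_self_le (p : K[X]) (c : K) (ρ : ℝ) :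
    ‖(nearFactor p c ρ).eval c‖ ≤ ρ ^ (nearRoots p c ρ).card := by
  rw [nearFactor, norm_eval_multiset_prod_X_sub_C, ← Multiset.prod_replicate, ← Multiset.map_const']
  exact Multiset.prod_map_le_prod_map₀ _ _ (fun _ _ ↦ dist_nonneg) fun z hz ↦
    dist_comm c z ▸ (dist_lt_of_mem_nearRoots hz).le

lemma pow_le_norm_eval_nearFactor (p : K[X]) (hx : ρ ≤ dist x c) :
    (dist x c - ρ) ^ (nearRoots p c ρ).card ≤ ‖(nearFactor p c ρ).eval x‖ := by
  rw [nearFactor, norm_eval_multiset_prod_X_sub_C, ← Multiset.prod_replicate, ← Multiset.map_const']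
  refine Multiset.prod_map_le_prod_map₀ _ _ (fun _ _ ↦ sub_nonneg.2 hx) fun z hz ↦ ?_
  linarith [dist_triangle x z c, dist_lt_of_mem_nearRoots hz]

lemma norm_eval_farFactor_le (hp : p.Splits) (hx : ρ < dist x c) :
    ‖(farFactor p c ρ).eval x‖ ≤ ‖p.eval x‖ / (dist x c - ρ) ^ (nearRoots p c ρ).card := by
  rw [le_div_iff₀' (pow_pos (sub_pos.2 hx) _), ← norm_eval_nearFactor_mul hp c ρ]
  gcongr
  exact pow_le_norm_eval_nearFactor p hx.le

lemma exp_neg_two_mul_le_one_sub {y : ℝ} (h0 : 0 ≤ y) (h1 : y ≤ 1 / 2) :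
    Real.exp (-(2 * y)) ≤ 1 - y := by
  rw [Real.exp_neg, inv_le_comm₀ (Real.exp_pos _) (by linarith)]
  refine le_trans ?_ (Real.add_one_le_exp (2 * y))
  rw [inv_le_iff_one_le_mul₀ (by linarith)]
  nlinarith

lemma exp_mul_norm_eval_farFactor_le (hp : p.natDegree ≤ n) (hρ : 0 < ρ) (hhρ : 2 * h ≤ ρ)
    (hx : dist x c ≤ h) :
    Real.exp (-(2 * (h / ρ)) * n) * ‖(farFactor p c ρ).eval c‖ ≤ ‖(farFactor p c ρ).eval x‖ := by
  have hh : 0 ≤ h := dist_nonneg.trans hx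
  have hexp : Real.exp (-(2 * (h / ρ))) ≤ 1 - h / ρ :=
    exp_neg_two_mul_le_one_sub (by positivity) (by rw [div_le_iff₀ hρ]; linarith)
  have hfactor : ∀ z ∈ farRoots p c ρ,
      Real.exp (-(2 * (h / ρ))) * dist c z ≤ dist x z := fun z hz ↦ by
    have hz' : ρ ≤ dist c z := dist_comm z c ▸ le_dist_of_mem_farRoots hz
    calc Real.exp (-(2 * (h / ρ))) * dist c z ≤ (1 - h / ρ) * dist c z := by gcongr
      _ ≤ dist c z - h := by
        have : h / ρ * ρ ≤ h / ρ * dist c z := by gcongr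
        rw [div_mul_cancel₀ _ hρ.ne'] at this
        linarith
      _ ≤ dist x z := by linarith [dist_triangle c x z, dist_comm c x]
  have hprod := Multiset.prod_map_le_prod_map₀ _ _ (fun _ _ ↦ by positivity) hfactor
  rw [Multiset.prod_map_mul, Multiset.map_const', Multiset.prod_replicate,
    ← Real.exp_nat_mul, ← norm_eval_multiset_prod_X_sub_C,
    ← norm_eval_multiset_prod_X_sub_C] at hprod
  have hcard : ((farRoots p c ρ).card : ℝ) ≤ n := by
    exact_mod_cast (card_farRoots_le p c ρ).trans hp
  have hmono : Real.exp (-(2 * (h / ρ)) * n) ≤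
      Real.exp ((farRoots p c ρ).card * -(2 * (h / ρ))) := by
    rw [Real.exp_le_exp]
    nlinarith [mul_le_mul_of_nonneg_left hcard (by positivity : 0 ≤ 2 * (h / ρ))]
  simp only [farFactor, eval_mul, eval_C, norm_mul]
  rw [mul_left_comm]
  gcongr
  exact (mul_le_mul_of_nonneg_right hmono (norm_nonneg _)).trans hprod

theorem norm_eval_nearFactor_le (hsplits : p.Splits) (hp : p.natDegree ≤ n) (hρ : 0 < ρ)
    (hhρ : 2 * h ≤ ρ) (hc : p.eval c ≠ 0) (hx : dist x c ≤ h) {μ : ℝ}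
    (hpx : ‖p.eval x‖ ≤ Real.exp (-(μ + 2 * (h / ρ)) * n) * ‖p.eval c‖) :
    ‖(nearFactor p c ρ).eval x‖ ≤ ρ ^ (nearRoots p c ρ).card * Real.exp (-μ * n) := by
  have hfar := exp_mul_norm_eval_farFactor_le hp hρ hhρ hx
  have hfar_pos : 0 < ‖(farFactor p c ρ).eval c‖ := by
    refine norm_pos_iff.2 fun h0 ↦ hc ?_
    rw [← nearFactor_mul_farFactor hsplits c ρ, eval_mul, h0, mul_zero]
  refine le_of_mul_le_mul_right ?_ (mul_pos (Real.exp_pos (-(2 * (h / ρ)) * n)) hfar_pos)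
  calc ‖(nearFactor p c ρ).eval x‖ *
        (Real.exp (-(2 * (h / ρ)) * n) * ‖(farFactor p c ρ).eval c‖)
      ≤ ‖(nearFactor p c ρ).eval x‖ * ‖(farFactor p c ρ).eval x‖ := by gcongr
    _ ≤ Real.exp (-(μ + 2 * (h / ρ)) * n) *
          (‖(nearFactor p c ρ).eval c‖ * ‖(farFactor p c ρ).eval c‖) := by
        rwa [norm_eval_nearFactor_mul hsplits, norm_eval_nearFactor_mul hsplits]
    _ ≤ Real.exp (-(μ + 2 * (h / ρ)) * n) *
          (ρ ^ (nearRoots p c ρ).card * ‖(farFactor p c ρ).eval c‖) := by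
        gcongr
        exact norm_eval_nearFactor_self_le p c ρ
    _ = _ := by
        rw [neg_add, add_mul, Real.exp_add]
        ring

end NearFar

section Cluster

lemma one_add_div_one_sub_pow_le {s : ℝ} {n k : ℕ} (hs0 : 0 ≤ s) (hs1 : s ≤ 1 / 3)
    (hk : 3 * s * n ≤ k) : ((1 + s) / (1 - s)) ^ n ≤ 3 ^ k := by
  calc ((1 + s) / (1 - s)) ^ n ≤ Real.exp (3 * s) ^ n := by
        gcongr
        · exact div_nonneg (by linarith) (by linarith)
        · rw [div_le_iff₀ (by linarith)]
          nlinarith [Real.add_one_le_exp (3 * s)]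
    _ ≤ Real.exp 1 ^ k := by
        rw [← Real.exp_nat_mul, ← Real.exp_nat_mul, Real.exp_le_exp]
        linarith
    _ ≤ 3 ^ k := by
        gcongr
        linarith [Real.exp_one_lt_d9]

variable {p : ℂ[X]} {n : ℕ} {x₀ ρ : ℝ}

-- Across the gap around `x₀`, the `k` near roots keep the near factor large, so the far factor,
-- and by Bernstein–Walsh its value at `x₀`, cannot be.
theorem norm_eval_le_of_card_nearRoots (hp : p.natDegree ≤ n) {B : ℝ}
    (hB : ∀ x ∈ Icc (-1 : ℝ) 1, ‖p.eval (x : ℂ)‖ ≤ B) (hx₀ : x₀ ∈ Icc (-1 : ℝ) 1) (hρ : 0 < ρ)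
    (hk : 0 < (nearRoots p x₀ ρ).card) :
    ‖p.eval (x₀ : ℂ)‖ ≤
      B * (54 * ρ * (n / (nearRoots p x₀ ρ).card) ^ 2) ^ (nearRoots p x₀ ρ).card := by
  set k := (nearRoots p x₀ ρ).card
  have hB0 : 0 ≤ B := (norm_nonneg _).trans (hB x₀ hx₀)
  have hkn : (k : ℝ) ≤ n := by exact_mod_cast (card_nearRoots_le p x₀ ρ).trans hp
  have hk' : (0 : ℝ) < k := by exact_mod_cast hk
  have hn : (0 : ℝ) < n := hk'.trans_le hkn
  set s : ℝ := k / (3 * n) with hs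
  have hs0 : 0 < s := by positivity
  have hs1 : s ≤ 1 / 3 := by rw [hs, div_le_iff₀ (by positivity)]; linarith
  have hbase : 54 * ρ * (n / k : ℝ) ^ 2 = ρ * (2 / s ^ 2) * 3 := by
    rw [hs]; field_simp; norm_num
  rw [hbase]
  rcases lt_or_ge (s ^ 2) (2 * ρ) with hlarge | hsmall
  · refine (hB x₀ hx₀).trans (le_mul_of_one_le_right hB0 (one_le_pow₀ ?_))
    have : 1 ≤ ρ * (2 / s ^ 2) := by rw [mul_div, le_div_iff₀ (by positivity)]; linarith
    linarith
  have hfar : ∀ x ∈ Icc (-1 : ℝ) 1, s ^ 2 ≤ dist x x₀ →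
      ‖(farFactor p x₀ ρ).eval (x : ℂ)‖ ≤ B * (2 / s ^ 2) ^ k := fun x hx hdist ↦ by
    have hxx₀ : dist (x : ℂ) x₀ = dist x x₀ := Complex.isometry_ofReal.dist_eq x x₀
    refine (norm_eval_farFactor_le (IsAlgClosed.splits p) (by linarith)).trans ?_
    rw [hxx₀, ← inv_div (s ^ 2) 2, inv_pow, ← div_eq_mul_inv]
    gcongr
    · exact hB x hx
    · linarith
  have hgrowth : ((1 + s) / (1 - s)) ^ n ≤ 3 ^ k :=
    one_add_div_one_sub_pow_le hs0.le hs1 (by rw [hs]; field_simp; rfl)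
  calc ‖p.eval (x₀ : ℂ)‖
      = ‖(nearFactor p x₀ ρ).eval (x₀ : ℂ)‖ * ‖(farFactor p x₀ ρ).eval (x₀ : ℂ)‖ :=
        (norm_eval_nearFactor_mul (IsAlgClosed.splits p) _ _ _).symm
    _ ≤ ρ ^ k * (B * (2 / s ^ 2) ^ k * ((1 + s) / (1 - s)) ^ n) := by
        gcongr
        · exact norm_eval_nearFactor_self_le p x₀ ρ
        · exact norm_eval_le_of_norm_eval_le_off_ball ((natDegree_farFactor_le _ _ _).trans hp)
            hs0.le (by linarith) hx₀ hfar
    _ ≤ ρ ^ k * (B * (2 / s ^ 2) ^ k * 3 ^ k) := by gcongr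
    _ = B * (ρ * (2 / s ^ 2) * 3) ^ k := by
        rw [mul_pow, mul_pow]
        ring

end Cluster

/-- The points of `[-1, 1]` at which `‖p‖ ≤ c`, the analogue of `sublevelSet` for complex
polynomials and an unnormalised level. -/
def normSublevelSet (p : ℂ[X]) (c : ℝ) : Set ℝ :=
  {x | x ∈ Icc (-1) 1 ∧ ‖p.eval (x : ℂ)‖ ≤ c}

section LocalEstimate

lemma prod_abs_sub_re_le_norm_eval_nearFactor (p : ℂ[X]) (c : ℂ) (ρ x : ℝ) :
    ∏ z : nearRoots p c ρ, dist x (z : ℂ).re ≤ ‖(nearFactor p c ρ).eval (x : ℂ)‖ := by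
  rw [nearFactor, norm_eval_multiset_prod_X_sub_C, ← Multiset.map_univ (nearRoots p c ρ)]
  refine Finset.prod_le_prod (fun _ _ ↦ dist_nonneg) fun z _ ↦ ?_
  simpa [Real.dist_eq, dist_eq_norm] using Complex.abs_re_le_norm ((x : ℂ) - z)

variable {p : ℂ[X]} {n : ℕ} {x₀ ρ h μ : ℝ}

theorem volume_closedBall_inter_setOf_norm_eval_le (hp : p.natDegree ≤ n) (hρ : 0 < ρ)
    (hhρ : 2 * h ≤ ρ) (hx₀ : p.eval (x₀ : ℂ) ≠ 0) (hk : 0 < (nearRoots p x₀ ρ).card) :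
    volume (closedBall x₀ h ∩
      {x : ℝ | ‖p.eval (x : ℂ)‖ ≤ Real.exp (-(μ + 2 * (h / ρ)) * n) * ‖p.eval (x₀ : ℂ)‖}) ≤
      ENNReal.ofReal (16 * (ρ * Real.exp (-μ * (n / (nearRoots p x₀ ρ).card)))) := by
  have hcard : Fintype.card (nearRoots p x₀ ρ) = (nearRoots p x₀ ρ).card := Multiset.card_coe _
  have : Nonempty (nearRoots p x₀ ρ) := Fintype.card_pos_iff.1 (hcard ▸ hk)
  refine (measure_mono fun x hx ↦ ?_).trans
    (volume_prod_dist_le_pow_le (fun z : nearRoots p x₀ ρ ↦ (z : ℂ).re) (by positivity))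
  have hdist : dist (x : ℂ) x₀ ≤ h := (Complex.isometry_ofReal.dist_eq x x₀).trans_le hx.1
  refine (prod_abs_sub_re_le_norm_eval_nearFactor p x₀ ρ x).trans
    ((norm_eval_nearFactor_le (IsAlgClosed.splits p) hp hρ hhρ hx₀ hdist hx.2).trans_eq ?_)
  rw [hcard, mul_pow, ← Real.exp_nat_mul]
  field_simp

theorem closedBall_inter_setOf_norm_eval_le_eq_empty (hp : p.natDegree ≤ n) (hρ : 0 < ρ)
    (hhρ : 2 * h ≤ ρ) (hx₀ : p.eval (x₀ : ℂ) ≠ 0) (hn : 0 < n) (hμ : 0 < μ)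
    (hk : (nearRoots p x₀ ρ).card = 0) :
    closedBall x₀ h ∩ {x : ℝ | ‖p.eval (x : ℂ)‖ ≤
      Real.exp (-(μ + 2 * (h / ρ)) * n) * ‖p.eval (x₀ : ℂ)‖} = ∅ := by
  rw [eq_empty_iff_forall_notMem]
  rintro x ⟨hx, hpx⟩
  have hdist : dist (x : ℂ) x₀ ≤ h := (Complex.isometry_ofReal.dist_eq x x₀).trans_le hx
  have hnear := norm_eval_nearFactor_le (IsAlgClosed.splits p) hp hρ hhρ hx₀ hdist hpx
  have hexp : Real.exp (-μ * n) < 1 := by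
    rw [Real.exp_lt_one_iff, neg_mul, neg_lt_zero]
    positivity
  rw [nearFactor, Multiset.card_eq_zero.1 hk] at hnear
  simp only [Multiset.map_zero, Multiset.prod_zero, eval_one, norm_one, Multiset.card_zero,
    pow_zero, one_mul] at hnear
  linarith

lemma exp_neg_one_add_mul_le {v c η : ℝ} (hv : 0 ≤ v) (hη : 0 < η)
    (h : Real.exp (-v) ≤ c * v ^ 2) : Real.exp (-((1 + η) * v)) ≤ 2 * c / η ^ 2 := by
  have hquad : (η * v) ^ 2 / 2 ≤ Real.exp (η * v) := by
    have := Real.quadratic_le_exp_of_nonneg (mul_nonneg hη.le hv)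
    nlinarith
  have hc : 0 ≤ c := by
    by_contra! hc
    nlinarith [Real.exp_pos (-v), mul_nonneg (neg_nonneg.2 hc.le) (sq_nonneg v)]
  rw [add_mul, one_mul, neg_add, Real.exp_add, Real.exp_neg (η * v), ← div_eq_mul_inv,
    div_le_div_iff₀ (Real.exp_pos _) (by positivity)]
  calc Real.exp (-v) * η ^ 2 ≤ c * v ^ 2 * η ^ 2 := by gcongr
    _ = 2 * c * ((η * v) ^ 2 / 2) := by ring
    _ ≤ 2 * c * Real.exp (η * v) := by gcongr

lemma mul_exp_neg_le_rpow {y a θ u q : ℝ} (hy0 : 0 < y) (hy1 : y ≤ 1) (ha : 0 < a) (hθ : 0 ≤ θ)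
    (h : Real.exp (-(a * u)) ≤ y) (hq : q ≤ 1 + θ / a) :
    y * Real.exp (-(θ * u)) ≤ y ^ q := by
  calc y * Real.exp (-(θ * u)) = y * Real.exp (-(a * u)) ^ (θ / a) := by
        rw [← Real.exp_mul]
        field_simp
    _ ≤ y * y ^ (θ / a) := by gcongr
    _ = y ^ (1 + θ / a) := by rw [Real.rpow_add hy0, Real.rpow_one]
    _ ≤ y ^ q := Real.rpow_le_rpow_of_exponent_ge hy0 hy1 hq

lemma one_sub_div_le_one_add_div {t γ : ℝ} (ht : 0 < t) (hγ : 0 < γ) :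
    (1 - γ / 4) / t ≤ 1 + (1 - t - γ / 8) / ((1 + γ / 8) * t) := by
  rw [div_le_iff₀ ht, add_mul, div_mul_eq_mul_div, mul_div_mul_right _ _ ht.ne',
    ← sub_le_iff_le_add', le_div_iff₀ (by positivity)]
  nlinarith [mul_pos hγ ht]

variable {δ t γ K M : ℝ}

lemma exp_neg_mul_div_card_nearRoots_le (hp : p.natDegree ≤ n)
    (hB : ∀ x ∈ Icc (-1 : ℝ) 1, ‖p.eval (x : ℂ)‖ ≤ 1) (hx₀ : x₀ ∈ Icc (-1 : ℝ) 1) (hρ : 0 < ρ)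
    (hμ : 0 < μ) (hpx₀ : Real.exp (-μ * n) ≤ ‖p.eval (x₀ : ℂ)‖)
    (hk : 0 < (nearRoots p x₀ ρ).card) {η : ℝ} (hη : 0 < η) :
    Real.exp (-((1 + η) * (μ * (n / (nearRoots p x₀ ρ).card)))) ≤ 108 * ρ / (η * μ) ^ 2 := by
  set k := (nearRoots p x₀ ρ).card
  have hcluster : Real.exp (-(μ * (n / k))) ^ k ≤ (54 * ρ * (n / k) ^ 2) ^ k := by
    calc Real.exp (-(μ * (n / k))) ^ k = Real.exp (-μ * n) := by
          rw [← Real.exp_nat_mul]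
          field_simp
      _ ≤ 1 * (54 * ρ * (n / k) ^ 2) ^ k :=
          hpx₀.trans (norm_eval_le_of_card_nearRoots hp hB hx₀ hρ hk)
      _ = _ := one_mul _
  have hbase : Real.exp (-(μ * (n / k))) ≤ 54 * ρ / μ ^ 2 * (μ * (n / k)) ^ 2 := by
    have hroot := (pow_le_pow_iff_left₀ (Real.exp_pos _).le (by positivity) hk.ne').1 hcluster
    refine hroot.trans_eq ?_
    field_simp
  refine (exp_neg_one_add_mul_le (by positivity) hη hbase).trans_eq ?_
  field_simp
  norm_num

lemma normSublevelSet_inter_closedBall_subset {σ τ : ℝ} (hστ : σ + τ ≤ δ)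
    (hpx₀ : Real.exp (-τ * n) ≤ ‖p.eval (x₀ : ℂ)‖) :
    normSublevelSet p (Real.exp (-δ * n)) ∩ closedBall x₀ h ⊆ closedBall x₀ h ∩
      {x : ℝ | ‖p.eval (x : ℂ)‖ ≤ Real.exp (-σ * n) * ‖p.eval (x₀ : ℂ)‖} := by
  rintro x ⟨hx, hxh⟩
  refine ⟨hxh, hx.2.trans (le_trans ?_ (mul_le_mul_of_nonneg_left hpx₀ (Real.exp_pos _).le))⟩
  rw [← Real.exp_add, ← add_mul, Real.exp_le_exp]
  gcongr
  linarith

lemma volume_normSublevelSet_inter_closedBall_le (hn : 0 < n) (hp : p.natDegree ≤ n)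
    (hB : ∀ x ∈ Icc (-1 : ℝ) 1, ‖p.eval (x : ℂ)‖ ≤ 1) (hδ : 0 < δ) (ht : 0 < t) (hγ : 0 < γ)
    (hγt : γ < 1 - t) (hx₀ : x₀ ∈ Icc (-1 : ℝ) 1)
    (hpx₀ : Real.exp (-(t * δ) * n) ≤ ‖p.eval (x₀ : ℂ)‖) (hK : 2 ≤ K) (hKδ : 2 / K ≤ γ / 8 * δ)
    (hKM : 16 * K ≤ M) (hδM : 108 * K / (γ / 8 * (t * δ)) ^ 2 ≤ M) (hh : 0 < h) (hMh : M * h ≤ 1) :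
    volume (normSublevelSet p (Real.exp (-δ * n)) ∩ closedBall x₀ h) ≤
      ENNReal.ofReal ((M * h) ^ ((1 - γ / 4) / t)) := by
  have hρ : 0 < K * h := by positivity
  have hhρ : 2 * h ≤ K * h := by gcongr
  have hθ : 0 < 1 - t - γ / 8 := by linarith
  have hpx₀' : p.eval (x₀ : ℂ) ≠ 0 := norm_pos_iff.1 ((Real.exp_pos _).trans_le hpx₀)
  have hστ : (1 - t - γ / 8) * δ + 2 * (h / (K * h)) + t * δ ≤ δ := by
    have hKh : 2 * (h / (K * h)) = 2 / K := by field_simp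
    linarith
  refine (measure_mono (normSublevelSet_inter_closedBall_subset hστ hpx₀)).trans ?_
  rcases Nat.eq_zero_or_pos (nearRoots p x₀ (K * h)).card with hk | hk
  · rw [closedBall_inter_setOf_norm_eval_le_eq_empty hp hρ hhρ hpx₀' hn (by positivity) hk,
      measure_empty]
    exact zero_le
  refine (volume_closedBall_inter_setOf_norm_eval_le hp hρ hhρ hpx₀' hk).trans
    (ENNReal.ofReal_le_ofReal ?_)
  set k := (nearRoots p x₀ (K * h)).card
  have hexp : Real.exp (-((1 + γ / 8) * t * (δ * (n / k)))) ≤ M * h := by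
    calc Real.exp (-((1 + γ / 8) * t * (δ * (n / k))))
        = Real.exp (-((1 + γ / 8) * (t * δ * (n / k)))) := by ring_nf
      _ ≤ 108 * (K * h) / (γ / 8 * (t * δ)) ^ 2 :=
          exp_neg_mul_div_card_nearRoots_le hp hB hx₀ hρ (by positivity) hpx₀ hk (by positivity)
      _ = 108 * K / (γ / 8 * (t * δ)) ^ 2 * h := by ring
      _ ≤ M * h := by gcongr
  calc 16 * (K * h * Real.exp (-((1 - t - γ / 8) * δ) * (n / k)))
      = 16 * K * h * Real.exp (-((1 - t - γ / 8) * (δ * (n / k)))) := by ring_nf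
    _ ≤ M * h * Real.exp (-((1 - t - γ / 8) * (δ * (n / k)))) := by gcongr
    _ ≤ (M * h) ^ ((1 - γ / 4) / t) :=
        mul_exp_neg_le_rpow ((Real.exp_pos _).trans_le hexp) hMh (by positivity) hθ.le hexp
          (one_sub_div_le_one_add_div ht hγ)

theorem exists_volume_normSublevelSet_inter_closedBall_le {δ₀ t₀ : ℝ} (hδ₀ : 0 < δ₀)
    (ht₀ : 0 < t₀) (hγ : 0 < γ) :
    ∃ M : ℝ, 1 ≤ M ∧ ∀ n : ℕ, 0 < n → ∀ p : ℂ[X], p.natDegree ≤ n →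
      (∀ x ∈ Icc (-1 : ℝ) 1, ‖p.eval (x : ℂ)‖ ≤ 1) →
      ∀ δ, δ₀ ≤ δ → ∀ t, t₀ ≤ t → γ < 1 - t → ∀ x₀ ∈ Icc (-1 : ℝ) 1,
      Real.exp (-(t * δ) * n) ≤ ‖p.eval (x₀ : ℂ)‖ → ∀ h, 0 < h → M * h ≤ 1 →
      volume (normSublevelSet p (Real.exp (-δ * n)) ∩ closedBall x₀ h) ≤
        ENNReal.ofReal ((M * h) ^ ((1 - γ / 4) / t)) := by
  set K : ℝ := 2 + 16 / (γ * δ₀) with hK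
  have hK0 : 0 < 16 / (γ * δ₀) := by positivity
  have hK2 : 2 ≤ K := by rw [hK]; linarith
  have hKδ₀ : 2 / K ≤ γ / 8 * δ₀ := by
    rw [div_le_iff₀ (by linarith)]
    calc 2 = γ / 8 * δ₀ * (16 / (γ * δ₀)) := by field_simp; norm_num
      _ ≤ γ / 8 * δ₀ * K := by gcongr; rw [hK]; linarith
  have hM : 0 ≤ 108 * K / (γ / 8 * (t₀ * δ₀)) ^ 2 := by positivity
  refine ⟨16 * K + 108 * K / (γ / 8 * (t₀ * δ₀)) ^ 2, by linarith, ?_⟩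
  intro n hn p hp hB δ hδ t ht hγt x₀ hx₀ hpx₀ h hh hMh
  have ht0 : 0 < t := ht₀.trans_le ht
  refine volume_normSublevelSet_inter_closedBall_le hn hp hB (hδ₀.trans_le hδ) ht0 hγ hγt hx₀
    hpx₀ hK2 (hKδ₀.trans (by gcongr)) (by linarith) ?_ hh hMh
  refine le_add_of_nonneg_of_le (by positivity) ?_
  gcongr

end LocalEstimate

section Covering

lemma ofReal_le_volume_closedBall_inter_Icc {a b x r : ℝ} (hx : x ∈ Icc a b) (hr : 2 * r ≤ b - a) :
    ENNReal.ofReal r ≤ volume (closedBall x r ∩ Icc a b) := by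
  rcases le_total r 0 with hr0 | hr0
  · simp [ENNReal.ofReal_of_nonpos hr0]
  rw [Real.closedBall_eq_Icc, Icc_inter_Icc, Real.volume_Icc]
  apply ENNReal.ofReal_le_ofReal
  rcases max_cases (x - r) a with h | h <;> rcases min_cases (x + r) b with h' | h' <;>
    linarith [hx.1, hx.2]

lemma tsum_rpow_le_rpow_tsum {ι : Type*} (f : ι → ENNReal) {p : ℝ} (hp : 1 ≤ p) :
    ∑' i, f i ^ p ≤ (∑' i, f i) ^ p := by
  have hsplit : ∀ c : ENNReal, c ^ p = c ^ (p - 1) * c := fun c ↦ by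
    conv_rhs => rw [← ENNReal.rpow_one c, ← ENNReal.rpow_mul, one_mul,
      ← ENNReal.rpow_add_of_nonneg _ _ (by linarith) zero_le_one, sub_add_cancel]
  simp only [hsplit]
  calc ∑' i, f i ^ (p - 1) * f i ≤ ∑' i, (∑' j, f j) ^ (p - 1) * f i :=
        ENNReal.tsum_le_tsum fun i ↦ by
          gcongr
          exact ENNReal.le_tsum i
    _ = (∑' i, f i) ^ (p - 1) * ∑' i, f i := ENNReal.tsum_mul_left

lemma closedBall_inter_subset_sdiff_of_lt_infDist {X : Type*} [PseudoMetricSpace X] {G I : Set X}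
    {x : X} {r : ℝ} (hr : r < infDist x G) : closedBall x r ∩ I ⊆ I \ G := fun _ hz ↦
  ⟨hz.2, (disjoint_closedBall_of_lt_infDist hr).notMem_of_mem_left hz.1⟩

variable {a b p : ℝ} {E G : Set ℝ} {M : ENNReal}

lemma volume_inter_closedBall_infDist_le (hG : IsCompact G) (hGne : G.Nonempty)
    (hGI : G ⊆ Icc a b) (hEG : E ⊆ Icc a b \ G) (hp : 0 ≤ p)
    (hloc : ∀ y ∈ G, ∀ h : ℝ, 0 < h → ENNReal.ofReal h ≤ 7 * volume (Icc a b \ G) →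
      volume (E ∩ closedBall y h) ≤ (M * ENNReal.ofReal h) ^ p) {x : ℝ} (hx : x ∈ E) :
    volume (E ∩ closedBall x (5 * (infDist x G / 2))) ≤
      (7 * M * volume (closedBall x (infDist x G / 2) ∩ Icc a b)) ^ p := by
  set r := infDist x G / 2 with hr
  obtain ⟨y, hyG, hxy⟩ := hG.exists_infDist_eq_dist hGne x
  have hdist : 0 < infDist x G := (hG.isClosed.notMem_iff_infDist_pos hGne).1 (hEG hx).2
  have hball : ENNReal.ofReal (7 * r) ≤ 7 * volume (closedBall x r ∩ Icc a b) := by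
    rw [ENNReal.ofReal_mul (by norm_num), ENNReal.ofReal_ofNat]
    gcongr
    refine ofReal_le_volume_closedBall_inter_Icc (hEG hx).1 ?_
    linarith [Real.dist_le_of_mem_Icc (hEG hx).1 (hGI hyG)]
  calc volume (E ∩ closedBall x (5 * r)) ≤ volume (E ∩ closedBall y (7 * r)) := by
        refine measure_mono (inter_subset_inter_right _ (closedBall_subset_closedBall' ?_))
        linarith
    _ ≤ (M * ENNReal.ofReal (7 * r)) ^ p := by
        refine hloc y hyG _ (by positivity) (hball.trans ?_)
        gcongr
        exact closedBall_inter_subset_sdiff_of_lt_infDist (half_lt_self hdist)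
    _ ≤ (7 * M * volume (closedBall x r ∩ Icc a b)) ^ p := by
        rw [mul_comm 7 M, mul_assoc]
        gcongr

-- A Vitali covering of `E` by balls about `x ∈ E` of radius half the distance from `x` to `G`:
-- these avoid `G`, while their enlargements lie in balls centred at points of `G`.
theorem volume_le_of_volume_inter_closedBall_le (hG : IsCompact G) (hGne : G.Nonempty)
    (hGI : G ⊆ Icc a b) (hEG : E ⊆ Icc a b \ G) (hp : 1 ≤ p)
    (hloc : ∀ y ∈ G, ∀ h : ℝ, 0 < h → ENNReal.ofReal h ≤ 7 * volume (Icc a b \ G) →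
      volume (E ∩ closedBall y h) ≤ (M * ENNReal.ofReal h) ^ p) :
    volume E ≤ (7 * M * volume (Icc a b \ G)) ^ p := by
  set r : ℝ → ℝ := fun x ↦ infDist x G / 2
  have hdist : ∀ x ∈ E, 0 < infDist x G := fun x hx ↦
    (hG.isClosed.notMem_iff_infDist_pos hGne).1 (hEG hx).2
  have hr0 : ∀ x ∈ E, 0 < r x := fun x hx ↦ half_pos (hdist x hx)
  have hr1 : ∀ x ∈ E, r x ≤ (b - a) / 2 := fun x hx ↦ by
    obtain ⟨y, hy⟩ := hGne
    have := Real.dist_le_of_mem_Icc (hEG hx).1 (hGI hy)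
    exact div_le_div_of_nonneg_right ((infDist_le_dist_of_mem hy).trans this) zero_le_two
  obtain ⟨u, huE, hdisj, hcov⟩ := Vitali.exists_disjoint_subfamily_covering_enlargement_closedBall
    E id r _ hr1 5 (by norm_num)
  have hu : u.Countable := hdisj.countable_of_nonempty_interior fun x hx ↦
    ⟨x, ball_subset_interior_closedBall (mem_ball_self (hr0 x (huE hx)))⟩
  have := hu.to_subtype
  have hdisj' : Pairwise (Function.onFun Disjoint fun x : u ↦ closedBall (x : ℝ) (r x) ∩ Icc a b) :=
    fun x y hxy ↦ (hdisj x.2 y.2 fun h ↦ hxy (Subtype.ext h)).mono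
      inter_subset_left inter_subset_left
  calc volume E ≤ volume (⋃ x ∈ u, E ∩ closedBall x (5 * r x)) := by
        refine measure_mono fun x hx ↦ ?_
        obtain ⟨c, hc, hsub⟩ := hcov x hx
        exact mem_biUnion hc ⟨hx, hsub (mem_closedBall_self (hr0 x hx).le)⟩
    _ ≤ ∑' x : u, volume (E ∩ closedBall (x : ℝ) (5 * r x)) := measure_biUnion_le _ hu _
    _ ≤ ∑' x : u, (7 * M * volume (closedBall (x : ℝ) (r x) ∩ Icc a b)) ^ p :=
        ENNReal.tsum_le_tsum fun x ↦
          volume_inter_closedBall_infDist_le hG hGne hGI hEG (by linarith) hloc (huE x.2)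
    _ ≤ (7 * M * ∑' x : u, volume (closedBall (x : ℝ) (r x) ∩ Icc a b)) ^ p := by
        rw [← ENNReal.tsum_mul_left]
        exact tsum_rpow_le_rpow_tsum _ hp
    _ ≤ (7 * M * volume (Icc a b \ G)) ^ p := by
        gcongr
        rw [← measure_iUnion hdisj' fun x ↦
          isClosed_closedBall.measurableSet.inter measurableSet_Icc]
        exact measure_mono (iUnion_subset fun x ↦
          closedBall_inter_subset_sdiff_of_lt_infDist (half_lt_self (hdist x (huE x.2))))

end Covering

section Globalization

lemma rpow_add_le_of_le_mul_rpow {m F A t γ : ℝ} (hm0 : 0 ≤ m) (hm1 : m ≤ 1) (hF : 0 ≤ F)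
    (hA : 0 < A) (ht : 0 < t) (hγ : 0 < γ) (hγt : γ < 1 - t) (hmA : m ^ (γ / 2) ≤ A⁻¹)
    (hmF : A * F ≤ 1 → m ≤ (A * F) ^ ((1 - γ / 4) / t)) : m ^ (t + γ) ≤ F := by
  rcases lt_or_ge 1 (A * F) with hlarge | hsmall
  · calc m ^ (t + γ) ≤ m ^ (γ / 2) :=
          Real.rpow_le_rpow_of_exponent_ge' hm0 hm1 (by positivity) (by linarith)
      _ ≤ A⁻¹ := hmA
      _ ≤ F := (inv_le_iff_one_le_mul₀' hA).2 hlarge.le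
  have hq : 0 < 1 - γ / 4 := by linarith
  have hroot : m ^ (t / (1 - γ / 4)) ≤ A * F := by
    refine (Real.rpow_le_rpow hm0 (hmF hsmall) (by positivity)).trans_eq ?_
    rw [← Real.rpow_mul (by positivity), div_mul_div_cancel₀ ht.ne', div_self hq.ne',
      Real.rpow_one]
  have hexp : γ / 2 + t / (1 - γ / 4) ≤ t + γ := by
    rw [← le_sub_iff_add_le', div_le_iff₀ hq]
    nlinarith
  calc m ^ (t + γ) ≤ m ^ (γ / 2 + t / (1 - γ / 4)) :=
        Real.rpow_le_rpow_of_exponent_ge' hm0 hm1 (by positivity) hexp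
    _ = m ^ (γ / 2) * m ^ (t / (1 - γ / 4)) :=
        Real.rpow_add_of_nonneg hm0 (by positivity) (by positivity)
    _ ≤ A⁻¹ * (A * F) := by gcongr
    _ = F := inv_mul_cancel_left₀ hA.ne' F

lemma volume_normSublevelSet_ne_top (p : ℂ[X]) (c : ℝ) : volume (normSublevelSet p c) ≠ ⊤ :=
  measure_ne_top_of_subset (fun _ hx ↦ hx.1) (isCompact_Icc (a := (-1 : ℝ)) (b := 1)).measure_ne_top

variable {p : ℂ[X]} {c d q M : ℝ}

lemma exists_le_norm_eval_of_volume_normSublevelSet_lt_two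
    (h : (volume (normSublevelSet p d)).toReal < 2) :
    ∃ x ∈ Icc (-1 : ℝ) 1, d ≤ ‖p.eval (x : ℂ)‖ := by
  by_contra! hlt
  have hfull : normSublevelSet p d = Icc (-1) 1 :=
    Subset.antisymm (fun _ hx ↦ hx.1) fun x hx ↦ ⟨hx, (hlt x hx).le⟩
  norm_num [hfull] at h

theorem volume_normSublevelSet_le (hcd : c < d) (hM : 1 ≤ M) (hq : 1 ≤ q)
    (hloc : ∀ x₀ ∈ Icc (-1 : ℝ) 1, d ≤ ‖p.eval (x₀ : ℂ)‖ → ∀ h, 0 < h → M * h ≤ 1 →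
      volume (normSublevelSet p c ∩ closedBall x₀ h) ≤ ENNReal.ofReal ((M * h) ^ q))
    (hsmall : 7 * M * (volume (normSublevelSet p d)).toReal ≤ 1) :
    (volume (normSublevelSet p c)).toReal ≤
      (7 * M * (volume (normSublevelSet p d)).toReal) ^ q := by
  set F := (volume (normSublevelSet p d)).toReal
  have hM0 : 0 ≤ M := zero_le_one.trans hM
  have hF : volume (normSublevelSet p d) = ENNReal.ofReal F :=
    (ENNReal.ofReal_toReal (volume_normSublevelSet_ne_top p d)).symm
  set G : Set ℝ := Icc (-1) 1 ∩ {x | d ≤ ‖p.eval (x : ℂ)‖}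
  have hG : IsCompact G := isCompact_Icc.inter_right (isClosed_le continuous_const (by fun_prop))
  have hGne : G.Nonempty := exists_le_norm_eval_of_volume_normSublevelSet_lt_two <| by
    nlinarith [ENNReal.toReal_nonneg (a := volume (normSublevelSet p d))]
  have hcompl : volume (Icc (-1) 1 \ G) ≤ ENNReal.ofReal F :=
    hF ▸ measure_mono fun x hx ↦ ⟨hx.1, le_of_not_ge fun h ↦ hx.2 ⟨hx.1, h⟩⟩
  have hsub : normSublevelSet p c ⊆ Icc (-1) 1 \ G := fun x hx ↦
    ⟨hx.1, fun h ↦ (hx.2.trans_lt hcd).not_ge h.2⟩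
  have hcover : volume (normSublevelSet p c) ≤
      (7 * ENNReal.ofReal M * volume (Icc (-1) 1 \ G)) ^ q := by
    refine volume_le_of_volume_inter_closedBall_le hG hGne inter_subset_left hsub hq ?_
    intro y hy h hh hhG
    rw [← ENNReal.ofReal_mul hM0, ENNReal.ofReal_rpow_of_nonneg (by positivity) (by linarith)]
    refine hloc y hy.1 hy.2 h hh ?_
    have hhF : ENNReal.ofReal h ≤ ENNReal.ofReal (7 * F) := by
      rw [ENNReal.ofReal_mul (by norm_num), ENNReal.ofReal_ofNat]
      exact hhG.trans (by gcongr)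
    have := (ENNReal.ofReal_le_ofReal_iff (by positivity)).1 hhF
    nlinarith
  refine ENNReal.toReal_le_of_le_ofReal (by positivity) (hcover.trans ?_)
  rw [← ENNReal.ofReal_rpow_of_nonneg (by positivity) (by linarith),
    ENNReal.ofReal_mul (by positivity), ENNReal.ofReal_mul (by norm_num), ENNReal.ofReal_ofNat]
  gcongr

end Globalization

theorem comparison_lemma_general {δ₀ t₀ γ : ℝ} (hδ₀ : 0 < δ₀) (ht₀ : 0 < t₀) (hγ : 0 < γ) :
    ∃ κ : ℝ, 0 < κ ∧ ∀ n : ℕ, 0 < n → ∀ p : ℂ[X], p.natDegree ≤ n →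
      (∀ x ∈ Icc (-1 : ℝ) 1, ‖p.eval (x : ℂ)‖ ≤ 1) →
      ∀ δ : ℝ, δ₀ ≤ δ → ∀ t : ℝ, t₀ ≤ t → γ < 1 - t →
      (volume (normSublevelSet p (Real.exp (-δ * n)))).toReal ≤ κ →
      (volume (normSublevelSet p (Real.exp (-δ * n)))).toReal ^ (t + γ) ≤
        (volume (normSublevelSet p (Real.exp (-(t * δ) * n)))).toReal := by
  obtain ⟨M, hM, hlocal⟩ := exists_volume_normSublevelSet_inter_closedBall_le hδ₀ ht₀ hγ
  have hA : 0 < 7 * M := by linarith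
  refine ⟨(7 * M)⁻¹ ^ (γ / 2)⁻¹, by positivity, fun n hn p hp hB δ hδ t ht hγt hκ ↦ ?_⟩
  have ht0 : 0 < t := ht₀.trans_le ht
  set m := (volume (normSublevelSet p (Real.exp (-δ * n)))).toReal
  have hm0 : 0 ≤ m := ENNReal.toReal_nonneg
  have hm1 : m ≤ 1 := hκ.trans
    (Real.rpow_le_one (by positivity) (inv_le_one_of_one_le₀ (by linarith)) (by positivity))
  have hmA : m ^ (γ / 2) ≤ (7 * M)⁻¹ :=
    (Real.le_rpow_inv_iff_of_pos hm0 (by positivity) (by positivity)).1 hκ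
  have hexp : Real.exp (-δ * n) < Real.exp (-(t * δ) * n) := by
    rw [Real.exp_lt_exp]
    gcongr
    nlinarith [hδ₀.trans_le hδ]
  have hq : 1 ≤ (1 - γ / 4) / t := by rw [le_div_iff₀ ht0]; linarith
  exact rpow_add_le_of_le_mul_rpow hm0 hm1 ENNReal.toReal_nonneg hA ht0 hγ hγt hmA
    (volume_normSublevelSet_le hexp hM hq (hlocal n hn p hp hB δ hδ t ht hγt))

section Complexification

variable {P : ℝ[X]} {n : ℕ}

lemma abs_eval_le_supNorm (P : ℝ[X]) {x : ℝ} (hx : x ∈ Icc (-1 : ℝ) 1) : |P.eval x| ≤ supNorm P :=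
  le_csSup (isCompact_Icc.image (by fun_prop)).bddAbove (mem_image_of_mem _ hx)

lemma supNorm_pos (hP : P ≠ 0) : 0 < supNorm P := by
  by_contra! hle
  refine hP (P.eq_zero_of_infinite_isRoot ((Icc_infinite (by norm_num : (-1 : ℝ) < 1)).mono ?_))
  exact fun x hx ↦ abs_nonpos_iff.1 ((abs_eval_le_supNorm P hx).trans hle)

/-- `P / ‖P‖` as a complex polynomial, to which the estimates for polynomials bounded by `1` on
`[-1, 1]` apply. -/
noncomputable def normalizedMap (P : ℝ[X]) : ℂ[X] :=
  ((supNorm P)⁻¹ • P).map Complex.ofRealHom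

lemma natDegree_normalizedMap_le (P : ℝ[X]) : (normalizedMap P).natDegree ≤ P.natDegree :=
  natDegree_map_le.trans (natDegree_smul_le _ _)

lemma norm_eval_normalizedMap (hP : P ≠ 0) (x : ℝ) :
    ‖(normalizedMap P).eval (x : ℂ)‖ = |P.eval x| / supNorm P := by
  rw [normalizedMap, ← Complex.ofRealHom_eq_coe, eval_map_apply, Complex.ofRealHom_eq_coe,
    Complex.norm_real, eval_smul, smul_eq_mul, Real.norm_eq_abs, abs_mul, abs_inv,
    abs_of_pos (supNorm_pos hP), inv_mul_eq_div]

lemma norm_eval_normalizedMap_le_one (hP : P ≠ 0) {x : ℝ} (hx : x ∈ Icc (-1 : ℝ) 1) :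
    ‖(normalizedMap P).eval (x : ℂ)‖ ≤ 1 := by
  rw [norm_eval_normalizedMap hP, div_le_one (supNorm_pos hP)]
  exact abs_eval_le_supNorm P hx

lemma sublevelSet_eq_normSublevelSet (hP : P ≠ 0) (n : ℕ) (δ : ℝ) :
    sublevelSet P n δ = normSublevelSet (normalizedMap P) (Real.exp (-δ * n)) := by
  ext x
  simp only [sublevelSet, normSublevelSet, mem_ofPred_eq, norm_eval_normalizedMap hP,
    div_le_iff₀ (supNorm_pos hP)]

end Complexification

theorem comparison_lemma :
    ∀ δ₀ : ℝ, 0 < δ₀ → ∀ t₀ : ℝ, 0 < t₀ → t₀ < 1 → ∀ γ : ℝ, 0 < γ →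
    ∃ κ : ℝ, 0 < κ ∧
      ∀ n : ℕ, 0 < n → ∀ P : Polynomial ℝ, P ≠ 0 → P.natDegree ≤ n →
      ∀ δ : ℝ, δ₀ ≤ δ → ∀ t : ℝ, t₀ ≤ t → t < 1 → γ < 1 - t →
      (volume (sublevelSet P n δ)).toReal ≤ κ →
      (volume (sublevelSet P n (t * δ))).toReal ≥
        ((volume (sublevelSet P n δ)).toReal) ^ (t + γ) := by
  intro δ₀ hδ₀ t₀ ht₀ _ γ hγ
  obtain ⟨κ, hκ, hcomparison⟩ := comparison_lemma_general hδ₀ ht₀ hγ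
  refine ⟨κ, hκ, fun n hn P hP hPn δ hδ t ht _ hγt hsmall ↦ ?_⟩
  rw [sublevelSet_eq_normSublevelSet hP] at hsmall ⊢
  rw [sublevelSet_eq_normSublevelSet hP]
  exact hcomparison n hn _ ((natDegree_normalizedMap_le P).trans hPn)
    (fun _ ↦ norm_eval_normalizedMap_le_one hP) δ hδ t ht hγt hsmall
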